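/- For every n ≥ 1, the total number of 2-colored partitions of K_3 × P_n (summed over all sizes i) equals 8^n; that is, Σ_{i≥1} c(n,i) = 8^n. -/

import Mathlib

open SimpleGraph Polynomial

/-- A 2-colored partition of a simple graph `G`: a partition of the vertex set into
nonempty parts, each inducing a connected subgraph, together with an assignment of one
of two colors to each part such that distinct parts joined by an edge get different colors. -/
structure TwoColoredPartition {V : Type*} (G : SimpleGraph V) where
  parts : Set (Set V)
  nonempty : ∀ p ∈ parts, p.Nonempty
  covers : ∀ v : V, ∃ p, p ∈ parts ∧ v ∈ p
  disj : ∀ p ∈ parts, ∀ q ∈ parts, p ≠ q → Disjoint p q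
  conn : ∀ p ∈ parts, (G.induce p).Connected
  color : parts → Fin 2
  proper : ∀ p q : parts, p ≠ q →
    (∃ v ∈ (p : Set V), ∃ w ∈ (q : Set V), G.Adj v w) → color p ≠ color q

/-- The size of a 2-colored partition: its number of parts. -/
noncomputable def TwoColoredPartition.size {V : Type*} {G : SimpleGraph V}
    (T : TwoColoredPartition G) : ℕ :=
  T.parts.ncard

/-- `c n i` is the number of 2-colored partitions of `K₃ × Pₙ` of size `i`. -/
noncomputable def c (n i : ℕ) : ℕ :=
  Nat.card {T : TwoColoredPartition ((⊤ : SimpleGraph (Fin 3)) □ pathGraph n) // T.size = i}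

/-- `tpoly n = ∑_{i ≥ 1} c(n,i) yⁱ ∈ ℤ[y]`. -/
noncomputable def tpoly (n : ℕ) : Polynomial ℤ :=
  ∑ᶠ (i : ℕ) (_ : 1 ≤ i), Polynomial.monomial i (c n i : ℤ)

/-!
The monochromatic components of an arbitrary map `χ : V → Fin 2` form a 2-colored
partition, and every 2-colored partition arises from exactly one `χ`: its parts must be the
components of the monochromatic edges, since each part is connected and adjacent parts differ in
color. A finite graph thus has `2 ^ |V|` such partitions, and `K₃ □ Pₙ` has `3 * n` vertices.
-/

section MonochromaticGraph

variable {V α : Type*} {G : SimpleGraph V} {χ : V → α} {v w : V}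

/-- The subgraph of `G` formed by its monochromatic edges with respect to an arbitrary, not
necessarily proper, coloring `χ` of the vertices. -/
def monochromaticGraph (G : SimpleGraph V) (χ : V → α) : SimpleGraph V where
  Adj v w := G.Adj v w ∧ χ v = χ w
  symm := ⟨fun _ _ h => ⟨h.1.symm, h.2.symm⟩⟩
  loopless := ⟨fun _ h => G.irrefl h.1⟩

theorem monochromaticGraph_le : monochromaticGraph G χ ≤ G := fun _ _ h => h.1

theorem mem_of_reachable {s : Set V} (hs : ∀ ⦃a b⦄, G.Adj a b → a ∈ s → b ∈ s)
    (hvw : G.Reachable v w) (hv : v ∈ s) : w ∈ s := by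
  rw [reachable_iff_reflTransGen] at hvw
  induction hvw with
  | refl => exact hv
  | tail _ hab ha => exact hs hab ha

theorem color_eq_of_reachable_monochromaticGraph
    (h : (monochromaticGraph G χ).Reachable v w) : χ v = χ w :=
  mem_of_reachable (G := monochromaticGraph G χ) (s := {x | χ v = χ x})
    (fun _ _ hab ha => ha.trans hab.2) h rfl

/-- The common color of the vertices in a connected component of the monochromatic edges. -/
def componentColor : (monochromaticGraph G χ).ConnectedComponent → α :=
  ConnectedComponent.lift χ fun _ _ walk _ =>
    color_eq_of_reachable_monochromaticGraph walk.reachable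

theorem componentColor_eq_of_mem_supp {C : (monochromaticGraph G χ).ConnectedComponent}
    (hv : v ∈ C.supp) : componentColor C = χ v :=
  congrArg componentColor hv.symm

theorem connected_induce_supp_monochromaticGraph
    (C : (monochromaticGraph G χ).ConnectedComponent) : (G.induce C.supp).Connected :=
  C.connected_toSimpleGraph.mono (comap_monotone _ monochromaticGraph_le)

end MonochromaticGraph

namespace TwoColoredPartition

variable {V : Type*} {G : SimpleGraph V}

theorem part_eq_of_mem (T : TwoColoredPartition G) {v : V} {p q : T.parts}
    (hp : v ∈ (p : Set V)) (hq : v ∈ (q : Set V)) : p = q := by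
  by_contra hne
  exact (T.disj p p.2 q q.2 (Subtype.coe_ne_coe.2 hne)).notMem_of_mem_left hp hq

/-- The vertex coloring induced by a 2-colored partition: every vertex gets the color of the part
containing it. -/
noncomputable def vertexColor (T : TwoColoredPartition G) (v : V) : Fin 2 :=
  T.color ⟨(T.covers v).choose, (T.covers v).choose_spec.1⟩

theorem vertexColor_eq_color (T : TwoColoredPartition G) {v : V} {p : T.parts}
    (hv : v ∈ (p : Set V)) : T.vertexColor v = T.color p :=
  congrArg T.color (T.part_eq_of_mem (T.covers v).choose_spec.2 hv)

theorem reachable_of_mem_part (T : TwoColoredPartition G) {v w : V} {p : T.parts}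
    (hv : v ∈ (p : Set V)) (hw : w ∈ (p : Set V)) :
    (monochromaticGraph G T.vertexColor).Reachable v w := by
  let inclusion : G.induce (p : Set V) →g monochromaticGraph G T.vertexColor :=
    { toFun := Subtype.val
      map_rel' := fun {a b} hab =>
        ⟨hab, (T.vertexColor_eq_color a.2).trans (T.vertexColor_eq_color b.2).symm⟩ }
  exact ((T.conn p p.2).preconnected ⟨v, hv⟩ ⟨w, hw⟩).map inclusion

theorem mem_part_of_adj (T : TwoColoredPartition G) {v w : V} {p : T.parts}
    (hvw : (monochromaticGraph G T.vertexColor).Adj v w) (hv : v ∈ (p : Set V)) :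
    w ∈ (p : Set V) := by
  obtain ⟨q, hq, hwq⟩ := T.covers w
  lift q to T.parts using hq
  have hcolor : T.color p = T.color q := by
    rw [← T.vertexColor_eq_color hv, ← T.vertexColor_eq_color hwq, hvw.2]
  have hpq : p = q := by
    by_contra hne
    exact T.proper p q hne ⟨v, hv, w, hwq, hvw.1⟩ hcolor
  rwa [hpq]

theorem part_eq_supp (T : TwoColoredPartition G) {v : V} {p : T.parts} (hv : v ∈ (p : Set V)) :
    (p : Set V) = ((monochromaticGraph G T.vertexColor).connectedComponentMk v).supp := by
  ext w
  rw [ConnectedComponent.mem_supp_iff, ConnectedComponent.eq]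
  exact ⟨fun hw => T.reachable_of_mem_part hw hv,
    fun hwv => mem_of_reachable (fun _ _ => T.mem_part_of_adj) hwv.symm hv⟩

theorem parts_eq_range_supp (T : TwoColoredPartition G) :
    T.parts = Set.range
      (ConnectedComponent.supp (G := monochromaticGraph G T.vertexColor)) := by
  ext p
  constructor
  · intro hp
    obtain ⟨v, hv⟩ := T.nonempty p hp
    exact ⟨_, (T.part_eq_supp (p := ⟨p, hp⟩) hv).symm⟩
  · rintro ⟨⟨v⟩, rfl⟩
    obtain ⟨p, hp, hv⟩ := T.covers v
    exact (T.part_eq_supp (p := ⟨p, hp⟩) hv) ▸ hp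

theorem vertexColor_injective : Function.Injective (vertexColor (G := G)) := by
  intro S T h
  have hparts : S.parts = T.parts := by rw [S.parts_eq_range_supp, T.parts_eq_range_supp, h]
  have hcolor (p : Set V) (hS : p ∈ S.parts) (hT : p ∈ T.parts) :
      S.color ⟨p, hS⟩ = T.color ⟨p, hT⟩ := by
    obtain ⟨v, hv⟩ := S.nonempty p hS
    rw [← S.vertexColor_eq_color (p := ⟨p, hS⟩) hv, ← T.vertexColor_eq_color (p := ⟨p, hT⟩) hv, h]
  clear h
  obtain ⟨parts, _, _, _, _, color, _⟩ := S
  obtain ⟨_, _, _, _, _, color', _⟩ := T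
  obtain rfl : parts = _ := hparts
  obtain rfl : color = color' := funext fun p => hcolor p p.2 p.2
  rfl

/-- The 2-colored partition into the connected components of the monochromatic edges of a vertex
coloring; a component has the color of any of its vertices. -/
noncomputable def ofVertexColoring (G : SimpleGraph V) (χ : V → Fin 2) :
    TwoColoredPartition G where
  parts := Set.range (ConnectedComponent.supp (G := monochromaticGraph G χ))
  nonempty := by
    rintro _ ⟨C, rfl⟩
    exact C.nonempty_supp
  covers v := ⟨_, ⟨_, rfl⟩, ConnectedComponent.connectedComponentMk_mem⟩
  disj := by
    rintro _ ⟨C, rfl⟩ _ ⟨D, rfl⟩ hne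
    exact pairwise_disjoint_supp_connectedComponent _ (ne_of_apply_ne _ hne)
  conn := by
    rintro _ ⟨C, rfl⟩
    exact connected_induce_supp_monochromaticGraph C
  color p := componentColor ((Equiv.ofInjective _ ConnectedComponent.supp_injective).symm p)
  proper := by
    rintro ⟨_, C, rfl⟩ ⟨_, D, rfl⟩ hne ⟨v, hv, w, hw, hvw⟩ hcolor
    rw [Equiv.ofInjective_symm_apply, Equiv.ofInjective_symm_apply,
      componentColor_eq_of_mem_supp hv, componentColor_eq_of_mem_supp hw] at hcolor
    have hwC : w ∈ C.supp := C.mem_supp_of_adj_mem_supp hv ⟨hvw, hcolor⟩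
    obtain rfl := ConnectedComponent.eq_of_common_vertex hwC hw
    exact hne rfl

theorem vertexColor_ofVertexColoring (χ : V → Fin 2) :
    (ofVertexColoring G χ).vertexColor = χ := by
  funext v
  let C := (monochromaticGraph G χ).connectedComponentMk v
  have hv : v ∈ C.supp := ConnectedComponent.connectedComponentMk_mem
  calc (ofVertexColoring G χ).vertexColor v
    _ = (ofVertexColoring G χ).color ⟨C.supp, C, rfl⟩ := vertexColor_eq_color _ hv
    _ = componentColor C :=
      congrArg componentColor (Equiv.ofInjective_symm_apply ConnectedComponent.supp_injective C)
    _ = χ v := componentColor_eq_of_mem_supp hv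

theorem vertexColor_bijective : Function.Bijective (vertexColor (G := G)) :=
  ⟨vertexColor_injective, fun χ => ⟨ofVertexColoring G χ, vertexColor_ofVertexColoring χ⟩⟩

instance [Finite V] : Finite (TwoColoredPartition G) :=
  Finite.of_injective _ vertexColor_injective

theorem card_eq_two_pow [Finite V] (G : SimpleGraph V) :
    Nat.card (TwoColoredPartition G) = 2 ^ Nat.card V := by
  rw [Nat.card_eq_of_bijective _ vertexColor_bijective, Nat.card_fun, Nat.card_fin]

theorem one_le_size [Finite V] [Nonempty V] (T : TwoColoredPartition G) : 1 ≤ T.size := by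
  obtain ⟨p, hp, -⟩ := T.covers (Classical.arbitrary V)
  exact (Set.ncard_pos (Set.toFinite _)).2 ⟨p, hp⟩

end TwoColoredPartition

theorem finsum_mem_card_fiber {α β : Type*} [Finite α] {f : α → β} {s : Set β}
    (hf : ∀ a, f a ∈ s) : ∑ᶠ b ∈ s, Nat.card {a // f a = b} = Nat.card α := by
  classical
  have := Fintype.ofFinite α
  have hsupport : s ∩ Function.support (fun b => Nat.card {a // f a = b}) ⊆
      Finset.univ.image f := by
    rintro b ⟨-, hb⟩
    obtain ⟨⟨a, rfl⟩⟩ := (Nat.card_ne_zero.1 hb).1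
    exact Finset.mem_image_of_mem f (Finset.mem_univ a)
  have himage : ↑(Finset.univ.image f) ⊆ s := by
    simpa [Set.range_subset_iff] using hf
  rw [finsum_mem_eq_sum_of_subset _ hsupport himage]
  simp only [Nat.card_eq_fintype_card, Fintype.card_subtype]
  exact (Finset.card_eq_sum_card_image f Finset.univ).symm

theorem total_count_K3_times_path_general {V : Type*} [Finite V] [Nonempty V]
    (G : SimpleGraph V) :
    ∑ᶠ (i : ℕ) (_ : 1 ≤ i), Nat.card {T : TwoColoredPartition G // T.size = i} =
      2 ^ Nat.card V :=
  (finsum_mem_card_fiber (s := Set.Ici 1) TwoColoredPartition.one_le_size).trans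
    (TwoColoredPartition.card_eq_two_pow G)

/-- For every `n ≥ 1`, the total number of 2-colored partitions of `K₃ × Pₙ` is `8ⁿ`. -/
theorem total_count_K3_times_path (n : ℕ) (hn : 1 ≤ n) :
    ∑ᶠ (i : ℕ) (_ : 1 ≤ i), c n i = 8 ^ n := by
  have : NeZero n := ⟨Nat.one_le_iff_ne_zero.1 hn⟩
  simpa [c, pow_mul] using
    total_count_K3_times_path_general ((⊤ : SimpleGraph (Fin 3)) □ pathGraph n)
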